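/- Let G be a distance-regular graph of diameter 3 with intersection array {k, b₁, b₂; 1, c₂, c₃} and distinct adjacency eigenvalues k > θ₁ > θ₂ > θ₃. Then the distance matrix 𝔻₁ of G has exactly 3 distinct eigenvalues if and only if c₂ + a₃ − b₂ ∈ {θ₁, θ₂, θ₃}. -/

import Mathlib

open Matrix

variable {V : Type*} [Fintype V] [DecidableEq V]

/-- The distance-`i` matrix of a graph: the `(x,y)` entry is 1 if `dist x y = i`, else 0. -/
noncomputable def distM (G : SimpleGraph V) (i : ℕ) : Matrix V V ℝ :=
  Matrix.of fun x y => if G.dist x y = i then (1 : ℝ) else 0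

/-- The `q`-distance matrix `𝔻_q = ∑_{i=1}^D (1 + 1/q + ⋯ + 1/q^{i-1}) • A_i`. -/
noncomputable def qDist (G : SimpleGraph V) (D : ℕ) (q : ℝ) : Matrix V V ℝ :=
  ∑ i ∈ Finset.Icc 1 D, (∑ j ∈ Finset.range i, (1 / q) ^ j) • distM G i

/-- `G` is distance-regular with diameter `D` and intersection numbers `b i`, `c i`
(with `c 1 = 1`): for any vertices `x, y` at distance `i ≤ D`, the number of neighbors
of `y` at distance `i - 1` from `x` is `c i` and the number of neighbors of `y` at
distance `i + 1` from `x` is `b i`. -/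
def IsDRG (G : SimpleGraph V) (D : ℕ) (b c : ℕ → ℕ) : Prop :=
  G.Connected ∧
  (∀ x y : V, G.dist x y ≤ D) ∧
  (∃ x y : V, G.dist x y = D) ∧
  c 1 = 1 ∧
  ∀ i ≤ D, ∀ x y : V, G.dist x y = i →
    ({z : V | G.Adj y z ∧ G.dist x z = i - 1} : Set V).ncard = c i ∧
    ({z : V | G.Adj y z ∧ G.dist x z = i + 1} : Set V).ncard = b i

/-- `a i = k - b i - c i` as a real number, where `k = b 0`. -/
noncomputable def aInt (b c : ℕ → ℕ) (i : ℕ) : ℝ := (b 0 : ℝ) - (b i : ℝ) - (c i : ℝ)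

/-!
The distance matrices of a distance-regular graph of diameter `D` satisfy a three-term recurrence
`Aᵢ₊₁ A = bᵢ Aᵢ + aᵢ₊₁ Aᵢ₊₁ + cᵢ₊₂ Aᵢ₊₂`, so each of them is a polynomial `vᵢ` in `A`, and
so is `𝔻_q`, say `𝔻_q = p(A)`. As `A` is symmetric, the spectrum of `𝔻_q` is the image under `p` of
the spectrum of `A`. All off-diagonal entries of `𝔻_q` being positive, `p(k)` is a simple
eigenvalue, so the question is how many of `p(θ₁), p(θ₂), p(θ₃)` coincide.

Let `D = 3` and let `θ ≠ k` be an eigenvalue of `A`. Hoffman's relation `∑ vᵢ(θ) = 0` eliminates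
`v₃` and makes `p(θ)` quadratic in `θ`, so that, for a second such eigenvalue `φ ≠ θ`,
`p(θ) = p(φ)` if and only if `θ + φ = a₁ - (1 + q) c₂`.
The recurrence at `i = 2`, where `A₄ = 0`, becomes a cubic equation for `θ`, whence
`θ₁ + θ₂ + θ₃ = a₁ + a₃ - b₂ - c₂`. Two of the values therefore coincide exactly when the remaining
eigenvalue is `q c₂ + a₃ - b₂`, and all three never do.
-/

open Polynomial Finset

theorem exists_adj_dist_eq_of_dist_eq_succ {W : Type*} {G : SimpleGraph W} {x y : W} {i : ℕ}
    (h : G.dist x y = i + 1) : ∃ z, G.Adj y z ∧ G.dist x z = i := by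
  obtain ⟨p, hp⟩ := G.exists_walk_of_dist_ne_zero (u := y) (v := x) (by rw [G.dist_comm]; omega)
  rw [G.dist_comm, h] at hp
  cases p with
  | nil => simp at hp
  | @cons _ z _ hyz p =>
    have hle : G.dist x z ≤ i := by
      rw [G.dist_comm]
      exact (G.dist_le p).trans (by simpa using hp.le)
    have hdiff := hyz.diff_dist_adj (u := x)
    exact ⟨z, hyz, by omega⟩

theorem add_add_eq_neg_of_cubic_roots {R : Type*} [CommRing R] [IsDomain R] {p q r x y z : R}
    (hxy : x ≠ y) (hxz : x ≠ z) (hyz : y ≠ z)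
    (hx : x ^ 3 + p * x ^ 2 + q * x + r = 0) (hy : y ^ 3 + p * y ^ 2 + q * y + r = 0)
    (hz : z ^ 3 + p * z ^ 2 + q * z + r = 0) :
    x + y + z = -p := by
  have hxy' : x ^ 2 + x * y + y ^ 2 + p * (x + y) + q = 0 := by
    apply mul_left_cancel₀ (sub_ne_zero.2 hxy); linear_combination hx - hy
  have hxz' : x ^ 2 + x * z + z ^ 2 + p * (x + z) + q = 0 := by
    apply mul_left_cancel₀ (sub_ne_zero.2 hxz); linear_combination hx - hz
  apply mul_left_cancel₀ (sub_ne_zero.2 hyz); linear_combination hxy' - hxz'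

theorem ncard_insert_triple_eq_three_iff {α : Type*} {s x y z : α}
    (hs : s ∉ ({x, y, z} : Set α)) (hxyz : ¬(x = y ∧ y = z)) :
    ({s, x, y, z} : Set α).ncard = 3 ↔ x = y ∨ x = z ∨ y = z := by
  rw [Set.ncard_insert_of_notMem hs, Nat.succ_inj]
  constructor
  · intro htwo
    by_contra! hne
    have hthree : ({x, y, z} : Set α).ncard = 3 :=
      Set.ncard_eq_three.2 ⟨x, y, z, hne.1, hne.2.1, hne.2.2, rfl⟩
    omega
  · rintro (rfl | rfl | rfl)
    · simpa using Set.ncard_pair fun hxz => hxyz ⟨rfl, hxz⟩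
    · simpa [Set.pair_comm] using Set.ncard_pair fun hxy => hxyz ⟨hxy, hxy.symm⟩
    · simpa using Set.ncard_pair fun hxy => hxyz ⟨hxy, rfl⟩

section Matrix

theorem aeval_mulVec_of_mulVec_eq_smul {R : Type*} [CommRing R] {A : Matrix V V R} {u : V → R}
    {t : R} (h : A *ᵥ u = t • u) (p : R[X]) : aeval A p *ᵥ u = p.eval t • u := by
  have hlin : aeval (toLinAlgEquiv' A) p u = p.eval t • u :=
    Module.End.aeval_apply_of_mem_apply_eq_smul (by rwa [toLinAlgEquiv'_apply])
  rwa [aeval_algHom_apply, toLinAlgEquiv'_apply] at hlin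

variable {K : Type*} [Field K]

theorem exists_mulVec_eq_smul_of_mem_spectrum {A : Matrix V V K} {t : K} (ht : t ∈ spectrum K A) :
    ∃ u : V → K, u ≠ 0 ∧ A *ᵥ u = t • u := by
  rw [← spectrum_toLin', ← Module.End.hasEigenvalue_iff_mem_spectrum] at ht
  obtain ⟨u, hu⟩ := ht.exists_hasEigenvector
  exact ⟨u, hu.2, by simpa using hu.apply_eq_smul⟩

theorem eval_eq_zero_of_aeval_eq_zero {A : Matrix V V K} {p : K[X]} (hp : aeval A p = 0) {t : K}
    (ht : t ∈ spectrum K A) : p.eval t = 0 := by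
  obtain ⟨u, hu, hAu⟩ := exists_mulVec_eq_smul_of_mem_spectrum ht
  have hpu := aeval_mulVec_of_mulVec_eq_smul hAu p
  rw [hp, zero_mulVec] at hpu
  exact (smul_eq_zero.1 hpu.symm).resolve_right hu

theorem spectrum_aeval_of_isHermitian {A : Matrix V V ℝ} (hA : A.IsHermitian) (p : ℝ[X]) :
    spectrum ℝ (aeval A p) = p.eval '' spectrum ℝ A := by
  rw [← cfc_polynomial p A hA, cfc_map_spectrum p.eval A hA p.continuous.continuousOn]

theorem apply_eq_apply_of_mulVec_eq_smul_of_pos {W R : Type*} [Fintype W] [Ring R] [LinearOrder R]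
    [IsStrictOrderedRing R] {M : Matrix W W R} {s : R} {u : W → R}
    (hM : ∀ x y, x ≠ y → 0 < M x y) (hs : M *ᵥ 1 = s • 1) (hu : M *ᵥ u = s • u) (x y : W) :
    u x = u y := by
  have : Nonempty W := ⟨x⟩
  obtain ⟨m, hm⟩ := Finite.exists_max u
  have hsum : ∑ z, M m z * (u m - u z) = 0 := by
    have hsm := congrFun hs m
    have hum := congrFun hu m
    simp only [mulVec, dotProduct, Pi.smul_apply, Pi.one_apply, smul_eq_mul, mul_one] at hsm hum
    simp only [mul_sub, sum_sub_distrib, ← sum_mul, hsm, hum, sub_self]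
  have hnonneg : ∀ z ∈ univ, 0 ≤ M m z * (u m - u z) := by
    intro z _
    obtain rfl | hmz := eq_or_ne m z
    · simp
    · exact mul_nonneg (hM m z hmz).le (sub_nonneg.2 (hm z))
  have hconst : ∀ z, u z = u m := by
    intro z
    obtain rfl | hmz := eq_or_ne m z
    · rfl
    · have hz := (sum_eq_zero_iff_of_nonneg hnonneg).1 hsum z (mem_univ z)
      have := (mul_eq_zero.1 hz).resolve_left (hM m z hmz).ne'
      exact (sub_eq_zero.1 this).symm
  rw [hconst x, hconst y]

end Matrix

section DistanceMatrix

variable {W : Type*}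

theorem distM_zero [DecidableEq W] {G : SimpleGraph W} (hG : G.Connected) : distM G 0 = 1 := by
  ext x y
  simp [distM, one_apply, hG.dist_eq_zero_iff]

theorem distM_one (G : SimpleGraph W) [DecidableRel G.Adj] : distM G 1 = G.adjMatrix ℝ := by
  ext x y
  simp [distM, SimpleGraph.adjMatrix_apply]

theorem isHermitian_distM (G : SimpleGraph W) (i : ℕ) : (distM G i).IsHermitian := by
  ext x y
  simp [distM, G.dist_comm]

theorem distM_mul_distM_one_apply [Fintype W] (G : SimpleGraph W) (i : ℕ) (x y : W) :
    (distM G i * distM G 1) x y = ({z : W | G.Adj y z ∧ G.dist x z = i} : Set W).ncard := by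
  classical
  rw [distM_one, SimpleGraph.mul_adjMatrix_apply, Set.ncard_eq_toFinset_card']
  simp only [distM, of_apply, sum_boole]
  congr 2
  ext z
  simp

theorem qDist_apply {G : SimpleGraph W} {D : ℕ} {x y : W} (h : G.dist x y ≤ D) (q : ℝ) :
    qDist G D q x y = ∑ j ∈ range (G.dist x y), (1 / q) ^ j := by
  simp only [qDist, Matrix.sum_apply, Matrix.smul_apply, distM, of_apply, smul_eq_mul, mul_ite,
    mul_one, mul_zero, sum_ite_eq, mem_Icc]
  split_ifs with hxy
  · rfl
  · rw [show G.dist x y = 0 by omega, sum_range_zero]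

end DistanceMatrix

/-- The distance polynomials `v₀ = 1, v₁ = X, …` of the intersection numbers `b`, `c`: for a
distance-regular graph of diameter `D` and `i ≤ D` they satisfy `vᵢ(A) = Aᵢ`. The value is
meaningful only as long as the `c j` with `2 ≤ j ≤ i` are nonzero. -/
noncomputable def distPoly (b c : ℕ → ℕ) : ℕ → ℝ[X]
  | 0 => 1
  | 1 => X
  | i + 2 => C (c (i + 2) : ℝ)⁻¹ *
      (distPoly b c (i + 1) * (X - C (aInt b c (i + 1))) - C (b i : ℝ) * distPoly b c i)

/-- The polynomial `p` with `p(A) = 𝔻_q` for a distance-regular graph of diameter `D`. -/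
noncomputable def qDistPoly (b c : ℕ → ℕ) (D : ℕ) (q : ℝ) : ℝ[X] :=
  ∑ i ∈ Icc 1 D, C (∑ j ∈ range i, (1 / q) ^ j) * distPoly b c i

namespace IsDRG

section Combinatorics

variable {W : Type*} {G : SimpleGraph W} {D i : ℕ} {b c : ℕ → ℕ}

theorem ncard_neighborSet (hG : IsDRG G D b c) (y : W) : (G.neighborSet y).ncard = b 0 := by
  obtain ⟨-, -, -, -, h⟩ := hG
  simpa [SimpleGraph.neighborSet] using (h 0 D.zero_le y y G.dist_self).2

theorem isRegularOfDegree [G.LocallyFinite] (hG : IsDRG G D b c) : G.IsRegularOfDegree (b 0) := by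
  intro y
  rw [← hG.ncard_neighborSet y, ← SimpleGraph.card_neighborSet_eq_degree,
    Set.ncard_eq_toFinset_card', Set.toFinset_card]

theorem exists_dist_eq (hG : IsDRG G D b c) (hi : i ≤ D) : ∃ x y, G.dist x y = i := by
  induction hi using Nat.decreasingInduction with
  | self => exact hG.2.2.1
  | of_succ i _ ih =>
    obtain ⟨x, y, hxy⟩ := ih
    obtain ⟨z, -, hxz⟩ := exists_adj_dist_eq_of_dist_eq_succ hxy
    exact ⟨x, z, hxz⟩

theorem c_succ_ne_zero [Finite W] (hG : IsDRG G D b c) (hi : i + 1 ≤ D) : c (i + 1) ≠ 0 := by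
  obtain ⟨x, y, hxy⟩ := hG.exists_dist_eq hi
  obtain ⟨-, -, -, -, h⟩ := hG
  rw [← (h _ hi x y hxy).1]
  obtain ⟨z, hz⟩ := exists_adj_dist_eq_of_dist_eq_succ hxy
  exact Set.ncard_ne_zero_of_mem (a := z) hz

theorem ncard_adj_dist_eq [Finite W] (hG : IsDRG G D b c) (hi : i + 1 ≤ D) {x y : W}
    (hxy : G.dist x y = i + 1) :
    (({z : W | G.Adj y z ∧ G.dist x z = i + 1} : Set W).ncard : ℝ) = aInt b c (i + 1) := by
  let S (j : ℕ) : Set W := {z | G.Adj y z ∧ G.dist x z = j}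
  have hdisj {j l : ℕ} (hjl : j ≠ l) : Disjoint (S j) (S l) :=
    Set.disjoint_left.2 fun z hj hl => hjl (hj.2.symm.trans hl.2)
  have hunion : G.neighborSet y = S i ∪ S (i + 1) ∪ S (i + 2) := by
    ext z
    simp only [SimpleGraph.mem_neighborSet, Set.mem_union, Set.mem_ofPred_eq, S, ← and_or_left,
      iff_self_and]
    intro hyz
    have := hyz.diff_dist_adj (u := x)
    omega
  have hcard : b 0 = (S i).ncard + (S (i + 1)).ncard + (S (i + 2)).ncard := by
    rw [← hG.ncard_neighborSet y, hunion, Set.ncard_union_eq, Set.ncard_union_eq]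
    · exact hdisj (by omega)
    · exact Set.disjoint_union_left.2 ⟨hdisj (by omega), hdisj (by omega)⟩
  obtain ⟨-, -, -, -, h⟩ := hG
  obtain ⟨hc, hb⟩ := h (i + 1) hi x y hxy
  rw [aInt, hcard, ← hc, ← hb, Nat.add_sub_cancel]
  push_cast
  ring

theorem distM_succ_mul_distM_one [Fintype W] (hG : IsDRG G D b c) (hi : i + 1 ≤ D) :
    distM G (i + 1) * distM G 1 = (b i : ℝ) • distM G i + aInt b c (i + 1) • distM G (i + 1)
      + (c (i + 2) : ℝ) • distM G (i + 2) := by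
  ext x y
  have hcount := hG.ncard_adj_dist_eq hi (x := x) (y := y)
  obtain ⟨-, hle, -, -, h⟩ := hG
  rw [distM_mul_distM_one_apply]
  simp only [distM, Matrix.add_apply, Matrix.smul_apply, of_apply, smul_eq_mul, mul_ite, mul_one,
    mul_zero]
  by_cases hlow : G.dist x y = i
  · simp [hlow, (h i (by omega) x y hlow).2]
  by_cases hmid : G.dist x y = i + 1
  · simp [hmid, hcount hmid]
  by_cases hhigh : G.dist x y = i + 2
  · simp [hhigh, ← (h (i + 2) (hhigh ▸ hle x y) x y hhigh).1]
  have hempty : ({z : W | G.Adj y z ∧ G.dist x z = i + 1} : Set W) = ∅ := by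
    refine Set.eq_empty_of_forall_notMem fun z ⟨hyz, hxz⟩ => ?_
    have := hyz.diff_dist_adj (u := x)
    omega
  simp [hlow, hmid, hhigh, hempty]

theorem distM_succ_diameter (hG : IsDRG G D b c) : distM G (D + 1) = 0 := by
  ext x y
  have := hG.2.1 x y
  simp [distM, show G.dist x y ≠ D + 1 by omega]

theorem distM_one_mul_one [Fintype W] (hG : IsDRG G D b c) :
    distM G 1 * of (fun _ _ => 1) = (b 0 : ℝ) • of (fun _ _ => 1) := by
  classical
  ext x y
  simp [distM_one, hG.isRegularOfDegree x]

theorem distM_one_mulVec_one [Fintype W] (hG : IsDRG G D b c) : distM G 1 *ᵥ 1 = (b 0 : ℝ) • 1 := by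
  classical
  ext x
  simp [distM_one, hG.isRegularOfDegree x]

theorem sum_distM (hG : IsDRG G D b c) : ∑ i ∈ range (D + 1), distM G i = of fun _ _ => 1 := by
  ext x y
  simp [Matrix.sum_apply, distM, Nat.lt_succ_of_le (hG.2.1 x y)]

end Combinatorics

section Spectrum

variable {G : SimpleGraph V} {D i : ℕ} {b c : ℕ → ℕ} {q θ φ : ℝ}

theorem aeval_distPoly (hG : IsDRG G D b c) (hi : i ≤ D) :
    aeval (distM G 1) (distPoly b c i) = distM G i := by
  induction i using Nat.twoStepInduction with
  | zero => simp [distPoly, distM_zero hG.1]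
  | one => simp [distPoly]
  | more i ih₀ ih₁ =>
    have hrec := hG.distM_succ_mul_distM_one (i := i) (by omega)
    have hc : (c (i + 2) : ℝ) ≠ 0 := mod_cast hG.c_succ_ne_zero hi
    have hmul : aeval (distM G 1) (distPoly b c (i + 1) * (X - C (aInt b c (i + 1)))
        - C (b i : ℝ) * distPoly b c i) = (c (i + 2) : ℝ) • distM G (i + 2) := by
      simp only [map_sub, map_mul, aeval_X, aeval_C, ih₀ (Nat.le_of_add_right_le hi),
        ih₁ (Nat.le_of_succ_le hi), mul_sub, hrec, Algebra.algebraMap_eq_smul_one,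
        mul_smul_comm, smul_mul_assoc, mul_one, one_mul]
      abel
    rw [distPoly, map_mul, hmul, aeval_C, ← Algebra.smul_def, inv_smul_smul₀ hc]

theorem aeval_qDistPoly (hG : IsDRG G D b c) (q : ℝ) :
    aeval (distM G 1) (qDistPoly b c D q) = qDist G D q := by
  rw [qDistPoly, qDist, map_sum]
  refine sum_congr rfl fun i hi => ?_
  rw [map_mul, aeval_C, hG.aeval_distPoly (mem_Icc.1 hi).2, ← Algebra.smul_def]

theorem spectrum_qDist (hG : IsDRG G D b c) (q : ℝ) :
    spectrum ℝ (qDist G D q) = (qDistPoly b c D q).eval '' spectrum ℝ (distM G 1) := by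
  rw [← hG.aeval_qDistPoly, spectrum_aeval_of_isHermitian (isHermitian_distM G 1)]

theorem eval_qDistPoly_ne (hG : IsDRG G D b c) (hq : 0 < q) (hθ : θ ∈ spectrum ℝ (distM G 1))
    (hθk : θ ≠ b 0) : (qDistPoly b c D q).eval θ ≠ (qDistPoly b c D q).eval (b 0 : ℝ) := by
  intro heq
  obtain ⟨u, hu, hAu⟩ := exists_mulVec_eq_smul_of_mem_spectrum hθ
  have hpos : ∀ x y, x ≠ y → 0 < qDist G D q x y := by
    intro x y hxy
    rw [qDist_apply (hG.2.1 x y)]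
    exact sum_pos (fun j _ => by positivity) (nonempty_range_iff.2 (hG.1.pos_dist_of_ne hxy).ne')
  have hDone := aeval_mulVec_of_mulVec_eq_smul hG.distM_one_mulVec_one (qDistPoly b c D q)
  have hDu := aeval_mulVec_of_mulVec_eq_smul hAu (qDistPoly b c D q)
  rw [heq] at hDu
  rw [hG.aeval_qDistPoly] at hDone hDu
  obtain ⟨x, hx⟩ := Function.ne_iff.1 hu
  have hconst : u = u x • 1 := by
    ext y
    simpa using apply_eq_apply_of_mulVec_eq_smul_of_pos hpos hDone hDu y x
  rw [hconst, mulVec_smul, hG.distM_one_mulVec_one, smul_comm, ← hconst] at hAu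
  exact hθk (smul_left_injective ℝ hu hAu).symm

theorem sum_eval_distPoly_eq_zero (hG : IsDRG G D b c) (hθ : θ ∈ spectrum ℝ (distM G 1))
    (hθk : θ ≠ b 0) : ∑ i ∈ range (D + 1), (distPoly b c i).eval θ = 0 := by
  have hann : aeval (distM G 1)
      ((X - C (b 0 : ℝ)) * ∑ i ∈ range (D + 1), distPoly b c i) = 0 := by
    rw [map_mul, map_sum, sum_congr rfl fun i hi => hG.aeval_distPoly (mem_range_succ_iff.1 hi),
      hG.sum_distM, map_sub, aeval_X, aeval_C, sub_mul, hG.distM_one_mul_one, ← Algebra.smul_def,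
      sub_self]
  have heval := eval_eq_zero_of_aeval_eq_zero hann hθ
  rw [eval_mul, eval_finsetSum, eval_sub, eval_X, eval_C] at heval
  exact (mul_eq_zero.1 heval).resolve_left (sub_ne_zero.2 hθk)

theorem mul_eval_distPoly_diameter (hG : IsDRG G (D + 1) b c) (hθ : θ ∈ spectrum ℝ (distM G 1)) :
    (θ - aInt b c (D + 1)) * (distPoly b c (D + 1)).eval θ = b D * (distPoly b c D).eval θ := by
  have hann : aeval (distM G 1) (distPoly b c (D + 1) * (X - C (aInt b c (D + 1)))
      - C (b D : ℝ) * distPoly b c D) = 0 := by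
    simp only [map_sub, map_mul, aeval_X, aeval_C, hG.aeval_distPoly le_rfl,
      hG.aeval_distPoly D.le_succ, mul_sub, hG.distM_succ_mul_distM_one le_rfl,
      hG.distM_succ_diameter, Algebra.algebraMap_eq_smul_one, mul_smul_comm, smul_mul_assoc,
      mul_one, one_mul, smul_zero]
    abel
  have heval := eval_eq_zero_of_aeval_eq_zero hann hθ
  simp only [eval_sub, eval_mul, eval_X, eval_C] at heval
  linear_combination heval

theorem eval_distPoly_two (b c : ℕ → ℕ) (θ : ℝ) :
    (distPoly b c 2).eval θ = (c 2 : ℝ)⁻¹ * (θ * (θ - aInt b c 1) - b 0) := by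
  simp [distPoly]

theorem one_add_add_eval_distPoly_eq_zero (hG : IsDRG G 3 b c) (hθ : θ ∈ spectrum ℝ (distM G 1))
    (hθk : θ ≠ b 0) : 1 + θ + (distPoly b c 2).eval θ + (distPoly b c 3).eval θ = 0 := by
  have hsum := hG.sum_eval_distPoly_eq_zero hθ hθk
  rwa [sum_range_succ, sum_range_succ, sum_range_succ, sum_range_one, distPoly, distPoly, eval_one,
    eval_X] at hsum

theorem eval_qDistPoly_three (hG : IsDRG G 3 b c) (q : ℝ) (hθ : θ ∈ spectrum ℝ (distM G 1))
    (hθk : θ ≠ b 0) :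
    (qDistPoly b c 3 q).eval θ = -(1 + 1 / q + (1 / q) ^ 2) - (1 / q + (1 / q) ^ 2) * θ
      - (1 / q) ^ 2 * (distPoly b c 2).eval θ := by
  have hsum := hG.one_add_add_eval_distPoly_eq_zero hθ hθk
  have hone : (distPoly b c 1).eval θ = θ := by rw [distPoly, eval_X]
  have hIcc : Icc 1 3 = {1, 2, 3} := by decide
  rw [qDistPoly, hIcc, sum_insert (by decide), sum_insert (by decide), sum_singleton]
  simp only [eval_add, eval_mul, eval_C, hone, sum_range_succ, sum_range_zero, pow_zero, pow_one]
  linear_combination (1 + 1 / q + (1 / q) ^ 2) * hsum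

theorem eval_qDistPoly_three_eq_iff (hG : IsDRG G 3 b c) (hq : q ≠ 0)
    (hθ : θ ∈ spectrum ℝ (distM G 1)) (hθk : θ ≠ b 0)
    (hφ : φ ∈ spectrum ℝ (distM G 1)) (hφk : φ ≠ b 0) (hθφ : θ ≠ φ) :
    (qDistPoly b c 3 q).eval θ = (qDistPoly b c 3 q).eval φ ↔
      θ + φ = aInt b c 1 - (1 + q) * c 2 := by
  have hc : (c 2 : ℝ) ≠ 0 := mod_cast hG.c_succ_ne_zero (i := 1) (by norm_num)
  have hsub : (qDistPoly b c 3 q).eval θ - (qDistPoly b c 3 q).eval φ =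
      (θ - φ) / (q ^ 2 * c 2) * (aInt b c 1 - (1 + q) * c 2 - (θ + φ)) := by
    rw [hG.eval_qDistPoly_three q hθ hθk, hG.eval_qDistPoly_three q hφ hφk, eval_distPoly_two,
      eval_distPoly_two]
    field_simp
    ring
  have hne : (θ - φ) / (q ^ 2 * c 2) ≠ 0 :=
    div_ne_zero (sub_ne_zero.2 hθφ) (mul_ne_zero (pow_ne_zero 2 hq) hc)
  rw [← sub_eq_zero, hsub, mul_eq_zero_iff_left hne, sub_eq_zero, eq_comm]

theorem cubic_eq_zero_of_mem_spectrum (hG : IsDRG G 3 b c) (hθ : θ ∈ spectrum ℝ (distM G 1))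
    (hθk : θ ≠ b 0) :
    θ ^ 3 + (c 2 + b 2 - aInt b c 1 - aInt b c 3) * θ ^ 2
      + (c 2 - b 0 - aInt b c 3 * (c 2 - aInt b c 1) - b 2 * aInt b c 1) * θ
      + (aInt b c 3 * (b 0 - c 2) - b 2 * b 0) = 0 := by
  have hc : (c 2 : ℝ) ≠ 0 := mod_cast hG.c_succ_ne_zero (i := 1) (by norm_num)
  have hsum := hG.one_add_add_eval_distPoly_eq_zero hθ hθk
  have hlast := hG.mul_eval_distPoly_diameter hθ
  have htwo : c 2 * (distPoly b c 2).eval θ = θ * (θ - aInt b c 1) - b 0 := by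
    rw [eval_distPoly_two, mul_inv_cancel_left₀ hc]
  linear_combination (c 2 : ℝ) * ((θ - aInt b c 3) * hsum - hlast)
    - (θ - aInt b c 3 + b 2) * htwo

theorem add_add_eigenvalues_eq (hG : IsDRG G 3 b c) {θ₁ θ₂ θ₃ : ℝ} (h₁₂ : θ₁ ≠ θ₂) (h₁₃ : θ₁ ≠ θ₃)
    (h₂₃ : θ₂ ≠ θ₃) (hθ : ∀ θ ∈ ({θ₁, θ₂, θ₃} : Set ℝ), θ ∈ spectrum ℝ (distM G 1) ∧ θ ≠ b 0) :
    θ₁ + θ₂ + θ₃ = aInt b c 1 + aInt b c 3 - b 2 - c 2 := by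
  have hcubic := fun θ h => hG.cubic_eq_zero_of_mem_spectrum (hθ θ h).1 (hθ θ h).2
  rw [add_add_eq_neg_of_cubic_roots h₁₂ h₁₃ h₂₃ (hcubic θ₁ (by simp)) (hcubic θ₂ (by simp))
    (hcubic θ₃ (by simp))]
  ring

end Spectrum

end IsDRG

theorem stmt10_general (G : SimpleGraph V) (b c : ℕ → ℕ) (hG : IsDRG G 3 b c) {q : ℝ} (hq : 0 < q)
    (θ₁ θ₂ θ₃ : ℝ) (h1 : (b 0 : ℝ) > θ₁) (h2 : θ₁ > θ₂) (h3 : θ₂ > θ₃)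
    (hspec : spectrum ℝ (distM G 1) = ({(b 0 : ℝ), θ₁, θ₂, θ₃} : Set ℝ)) :
    (spectrum ℝ (qDist G 3 q)).ncard = 3 ↔
      q * c 2 + aInt b c 3 - (b 2 : ℝ) ∈ ({θ₁, θ₂, θ₃} : Set ℝ) := by
  set p := (qDistPoly b c 3 q).eval
  have hθ : ∀ θ ∈ ({θ₁, θ₂, θ₃} : Set ℝ), θ ∈ spectrum ℝ (distM G 1) ∧ θ ≠ b 0 := by
    rintro θ (rfl | rfl | rfl) <;> exact ⟨by simp [hspec], by linarith⟩
  have hsum := hG.add_add_eigenvalues_eq h2.ne' (h3.trans h2).ne' h3.ne' hθ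
  have hk : p (b 0) ∉ ({p θ₁, p θ₂, p θ₃} : Set ℝ) := by
    rw [← Set.image_singleton, ← Set.image_insert_eq, ← Set.image_insert_eq]
    rintro ⟨θ, hmem, heq⟩
    exact hG.eval_qDistPoly_ne hq (hθ θ hmem).1 (hθ θ hmem).2 heq
  have heq {θ φ ψ : ℝ} (h : θ ∈ ({θ₁, θ₂, θ₃} : Set ℝ)) (h' : φ ∈ ({θ₁, θ₂, θ₃} : Set ℝ))
      (hlt : θ > φ) (hψ : θ + φ + ψ = θ₁ + θ₂ + θ₃) :
      p θ = p φ ↔ q * c 2 + aInt b c 3 - b 2 = ψ := by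
    rw [hG.eval_qDistPoly_three_eq_iff hq.ne' (hθ θ h).1 (hθ θ h).2 (hθ φ h').1 (hθ φ h').2 hlt.ne']
    constructor <;> intro <;> linarith
  have h₁₂ := heq (θ := θ₁) (φ := θ₂) (ψ := θ₃) (by simp) (by simp) h2 rfl
  have h₁₃ := heq (θ := θ₁) (φ := θ₃) (ψ := θ₂) (by simp) (by simp) (h3.trans h2) (by ring)
  have h₂₃ := heq (θ := θ₂) (φ := θ₃) (ψ := θ₁) (by simp) (by simp) h3 (by ring)
  have hnot : ¬(p θ₁ = p θ₂ ∧ p θ₂ = p θ₃) := by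
    rw [h₁₂, h₂₃]
    exact fun ⟨h, h'⟩ => (h3.trans h2).ne (h.symm.trans h')
  rw [hG.spectrum_qDist, hspec, Set.image_insert_eq, Set.image_insert_eq, Set.image_insert_eq,
    Set.image_singleton, ncard_insert_triple_eq_three_iff hk hnot, h₁₂, h₁₃, h₂₃]
  simp only [Set.mem_insert_iff, Set.mem_singleton_iff]
  tauto

/-- Corollary 3.7: a distance-regular graph of diameter 3 with
intersection array `{k, b₁, b₂; 1, c₂, c₃}` and distinct adjacency eigenvalues
`k > θ₁ > θ₂ > θ₃` has exactly 3 distinct distance eigenvalues if and only if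
`c₂ + a₃ − b₂` is one of `θ₁, θ₂, θ₃`. -/
theorem stmt10 (G : SimpleGraph V) (b c : ℕ → ℕ) (hG : IsDRG G 3 b c)
    (θ₁ θ₂ θ₃ : ℝ) (h1 : (b 0 : ℝ) > θ₁) (h2 : θ₁ > θ₂) (h3 : θ₂ > θ₃)
    (hspec : spectrum ℝ (distM G 1) = ({(b 0 : ℝ), θ₁, θ₂, θ₃} : Set ℝ)) :
    (spectrum ℝ (qDist G 3 1)).ncard = 3 ↔
      (c 2 : ℝ) + aInt b c 3 - (b 2 : ℝ) ∈ ({θ₁, θ₂, θ₃} : Set ℝ) := by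
  simpa only [one_mul] using stmt10_general G b c hG one_pos θ₁ θ₂ θ₃ h1 h2 h3 hspec
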